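/- Let E be a real inner product space and f, H ∈ E with f ≠ 0, H ≠ 0 and ⟪f, H⟫ = −(1 + ‖f‖²)·‖H‖²/2. Set PH = H − (2·⟪f, H⟫/‖f‖²) • f. Then ‖PH‖ = ‖H‖ and −(1/‖f‖²) • f + (1/‖H‖²) • PH = f + (1/‖H‖²) • H. -/

import Mathlib

open RealInnerProductSpace

theorem dual_inversion_reflection_sphere_case
    {E : Type*} [NormedAddCommGroup E] [InnerProductSpace ℝ E]
    (f H : E) (hf : f ≠ 0) (hH : H ≠ 0)
    (hfH : ⟪f, H⟫ = -(1 + ‖f‖^2) * ‖H‖^2 / 2)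
    (PH : E) (hPH : PH = H - (2 * ⟪f, H⟫ / ‖f‖^2) • f) :
    ‖PH‖ = ‖H‖ ∧
      -(1/‖f‖^2) • f + (1/‖H‖^2) • PH = f + (1/‖H‖^2) • H := by
  have hf' : ‖f‖ ≠ 0 := norm_ne_zero_iff.mpr hf
  have hH' : ‖H‖ ≠ 0 := norm_ne_zero_iff.mpr hH
  subst hPH
  constructor
  · -- `PH` is the reflection of `H` in the hyperplane orthogonal to `f`, so this holds for any `H`.
    have hsq : ‖H - (2 * ⟪f, H⟫ / ‖f‖^2) • f‖^2 = ‖H‖^2 := by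
      rw [norm_sub_sq_real, inner_smul_right, norm_smul, mul_pow, Real.norm_eq_abs, sq_abs,
        real_inner_comm f H]
      field_simp
      ring
    exact (sq_eq_sq₀ (norm_nonneg _) (norm_nonneg _)).mp hsq
  · rw [hfH]
    match_scalars <;> field_simp
    ring
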